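/- Let Φ : T(H1) → T(H2) be a quantum operation between trace-class operators on separable Hilbert spaces, and suppose Ψ1 : T(H1) → T(H3) and Ψ2 : T(H1) → T(H4) are both quantum operations complementary to Φ. Then there exists a partial isometry W ∈ B(H3,H4) such that Ψ2(T) = W Ψ1(T) W* and Ψ1(T) = W* Ψ2(T) W for all T ∈ T(H1). -/

import Mathlib

/-!
Slicing a dilation `A : H1 → H2 ⊗ H3` by a vector `x ∈ H2` gives the operator
`A_x = (x ⊗ ·)* A : H1 → H3`, and Parseval's identity turns the partial trace of the rank-one
operator `|h⟩⟨k|` into a Gram matrix: `⟪x, Φ(|h⟩⟨k|) y⟫ = ⟪A_y k, A_x h⟫`.  Two dilations `A`, `B`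
of the same `Φ` therefore give families `(A_x h)` in `H3` and `(B_x h)` in `H4` with equal Gram
matrices, so there is a partial isometry `W` with `W A_x h = B_x h` and `W* B_x h = A_x h`
(`exists_partialIsometry_of_gram_eq`).

The other partial trace is computed from slices by `z ∈ H3`: for `T = Σ_n |x_n⟩⟨y_n|`,
`⟪z, Ψ1(T) z'⟫ = Σ_n ⟪(· ⊗ z')* A y_n, (· ⊗ z)* A x_n⟫`, whichever Hilbert basis is used for the
partial trace (`eq_tsum_of_hasSum_diag`).  Since `(· ⊗ W* z)* A = (· ⊗ z)* B`, this formula gives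
`⟪W* z, Ψ1(T) W* z'⟫ = ⟪z, Ψ2(T) z'⟫`, and the second identity follows by exchanging the roles of
the two complements (`compl_eq_conj`).
-/

noncomputable section

namespace PaperInf

open scoped ComplexInnerProductSpace ComplexOrder
open ContinuousLinearMap TopologicalSpace

/-- A bundled separable complex Hilbert space. -/
structure SepHilbert : Type 1 where
  carrier : Type
  [nacg : NormedAddCommGroup carrier]
  [ips : InnerProductSpace ℂ carrier]
  [cs : CompleteSpace carrier]
  [sep : SeparableSpace carrier]

attribute [instance] SepHilbert.nacg SepHilbert.ips SepHilbert.cs SepHilbert.sep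

variable {H H1 H2 H3 H4 K W W' : Type*}
  [NormedAddCommGroup H] [InnerProductSpace ℂ H] [CompleteSpace H]
  [NormedAddCommGroup H1] [InnerProductSpace ℂ H1] [CompleteSpace H1]
  [NormedAddCommGroup H2] [InnerProductSpace ℂ H2] [CompleteSpace H2]
  [NormedAddCommGroup H3] [InnerProductSpace ℂ H3] [CompleteSpace H3]
  [NormedAddCommGroup H4] [InnerProductSpace ℂ H4] [CompleteSpace H4]
  [NormedAddCommGroup K] [InnerProductSpace ℂ K] [CompleteSpace K]
  [NormedAddCommGroup W] [InnerProductSpace ℂ W] [CompleteSpace W]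
  [NormedAddCommGroup W'] [InnerProductSpace ℂ W'] [CompleteSpace W']

/-- `T` is a trace-class operator: it admits a nuclear decomposition
`T = Σ_n |x_n⟩⟨y_n|` with `Σ_n ‖x_n‖ ‖y_n‖ < ∞`. -/
def IsTraceClass (T : H →L[ℂ] H) : Prop :=
  ∃ x y : ℕ → H, Summable (fun n => ‖x n‖ * ‖y n‖) ∧
    ∀ v, HasSum (fun n => ⟪y n, v⟫ • x n) (T v)

/-- The rank-one operator `|x⟩⟨y| : H1 → H2`, `v ↦ ⟪y, v⟫ x`. -/
def ketbra (x : H2) (y : H1) : H1 →L[ℂ] H2 :=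
  (innerSL ℂ y).smulRight x

/-- The trace of an operator, computed in a (choice of) Hilbert basis.  On trace-class
operators this is the usual basis-independent trace. -/
def trace (T : H →L[ℂ] H) : ℂ :=
  ∑' i : (exists_hilbertBasis ℂ H).choose, ⟪(i : H), T (i : H)⟫

/-- `ρ` is a state: a positive trace-class operator of trace one. -/
def IsState (ρ : H →L[ℂ] H) : Prop :=
  IsTraceClass ρ ∧ ρ.IsPositive ∧ trace ρ = 1

/-- `Φ` is a quantum operation from `T(H1)` to `T(H2)`: a (trace-norm bounded linear) map whose
dual is a normal completely positive map; equivalently a map admitting a Kraus decomposition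
`Φ(T) = Σ_j A_j T A_j*` with `Σ_j A_j* A_j` convergent in the strong operator topology to a
bounded operator. -/
def IsQuantumOperation (Φ : (H1 →L[ℂ] H1) → (H2 →L[ℂ] H2)) : Prop :=
  ∃ (ι : Type) (_ : Countable ι) (A : ι → H1 →L[ℂ] H2) (S : H1 →L[ℂ] H1),
    (∀ x, HasSum (fun j => adjoint (A j) (A j x)) (S x)) ∧
    ∀ T, IsTraceClass T → HasSum (fun j => A j ∘L T ∘L adjoint (A j)) (Φ T)

/-- A quantum channel is a trace-preserving quantum operation. -/
def IsQuantumChannel (Φ : (H1 →L[ℂ] H1) → (H2 →L[ℂ] H2)) : Prop :=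
  IsQuantumOperation Φ ∧ ∀ T, IsTraceClass T → trace (Φ T) = trace T

/-- A realization of `W` as the Hilbert-space tensor product `K ⊗ H`:
a map `t : K → H → W` with `⟪t x y, t x' y'⟫ = ⟪x,x'⟫ ⟪y,y'⟫` whose range spans a
dense subspace. -/
structure TensorStruct (K H W : Type*) [NormedAddCommGroup K] [InnerProductSpace ℂ K]
    [NormedAddCommGroup H] [InnerProductSpace ℂ H]
    [NormedAddCommGroup W] [InnerProductSpace ℂ W] : Type _ where
  t : K → H → W
  inner_t : ∀ (x x' : K) (y y' : H), ⟪t x y, t x' y'⟫ = ⟪x, x'⟫ * ⟪y, y'⟫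
  dense_t : (Submodule.span ℂ {w : W | ∃ x y, w = t x y}).topologicalClosure = ⊤

/-- `P = tr_{H'}(S)`: the partial trace of `S ∈ B(W)`, `W = H ⊗ H'`, over the second factor. -/
def IsPartialTraceRight {H' : Type*} [NormedAddCommGroup H'] [InnerProductSpace ℂ H']
    (ts : TensorStruct H H' W) (S : W →L[ℂ] W) (P : H →L[ℂ] H) : Prop :=
  ∃ (ι : Type) (_ : Countable ι) (b : HilbertBasis ι ℂ H'),
    ∀ x y : H, HasSum (fun i => ⟪ts.t x (b i), S (ts.t y (b i))⟫) ⟪x, P y⟫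

/-- `P = tr_{H}(S)`: the partial trace of `S ∈ B(W)`, `W = H ⊗ H'`, over the first factor. -/
def IsPartialTraceLeft {H' : Type*} [NormedAddCommGroup H'] [InnerProductSpace ℂ H']
    (ts : TensorStruct H H' W) (S : W →L[ℂ] W) (P : H' →L[ℂ] H') : Prop :=
  ∃ (ι : Type) (_ : Countable ι) (b : HilbertBasis ι ℂ H),
    ∀ x y : H', HasSum (fun i => ⟪ts.t (b i) x, S (ts.t (b i) y)⟫) ⟪x, P y⟫

/-- The quantum operation `Ψ : T(H1) → T(H3)` is complementary to the quantum operation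
`Φ : T(H1) → T(H2)`: there is a bounded operator `A : H1 → H2 ⊗ H3` with
`Φ(T) = tr_{H3}(A T A*)` and `Ψ(T) = tr_{H2}(A T A*)` for all trace-class `T`. -/
def IsComplementary (Ψ : (H1 →L[ℂ] H1) → (H3 →L[ℂ] H3))
    (Φ : (H1 →L[ℂ] H1) → (H2 →L[ℂ] H2)) : Prop :=
  ∃ (W : SepHilbert) (ts : TensorStruct H2 H3 W.carrier) (A : H1 →L[ℂ] W.carrier),
    ∀ T, IsTraceClass T →
      IsPartialTraceRight ts (A ∘L T ∘L adjoint A) (Φ T) ∧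
      IsPartialTraceLeft ts (A ∘L T ∘L adjoint A) (Ψ T)

/-- `Φ` is degradable: there is a quantum operation `Γ` with `Γ ∘ Φ` complementary to `Φ`;
equivalently (and as formalized here), for every quantum operation `Ψ` complementary to `Φ`
there is a quantum operation `Γ` with `Γ ∘ Φ = Ψ`. -/
def Degradable (Φ : (H1 →L[ℂ] H1) → (H2 →L[ℂ] H2)) : Prop :=
  ∀ (K : SepHilbert) (Ψ : (H1 →L[ℂ] H1) → (K.carrier →L[ℂ] K.carrier)),
    IsQuantumOperation Ψ → IsComplementary Ψ Φ →
      ∃ Γ : (H2 →L[ℂ] H2) → (K.carrier →L[ℂ] K.carrier),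
        IsQuantumOperation Γ ∧ ∀ T, IsTraceClass T → Γ (Φ T) = Ψ T

/-- `Φ` is anti-degradable: some (equivalently, by the uniqueness of complements up to
partial isometries, every) quantum operation complementary to `Φ` is degradable. -/
def AntiDegradable (Φ : (H1 →L[ℂ] H1) → (H2 →L[ℂ] H2)) : Prop :=
  ∀ (K : SepHilbert) (Ψ : (H1 →L[ℂ] H1) → (K.carrier →L[ℂ] K.carrier)),
    IsQuantumOperation Ψ → IsComplementary Ψ Φ → Degradable Ψ

/-- `τ = ρ1 ⊗ ρ2` on `W = K ⊗ H`. -/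
def IsProductOp (ts : TensorStruct K H W) (ρ1 : K →L[ℂ] K) (ρ2 : H →L[ℂ] H)
    (τ : W →L[ℂ] W) : Prop :=
  ∀ (x x' : K) (y y' : H), ⟪ts.t x y, τ (ts.t x' y')⟫ = ⟪x, ρ1 x'⟫ * ⟪y, ρ2 y'⟫

/-- `ρ` (a positive trace-class operator on `W = K ⊗ H`) is countably decomposable separable:
`ρ = Σ_n p_n ρ_n^(1) ⊗ ρ_n^(2)` (trace-norm convergent) for states `ρ_n^(1)`, `ρ_n^(2)` and
nonnegative summable weights `p_n`. -/
def CDSeparable (ts : TensorStruct K H W) (ρ : W →L[ℂ] W) : Prop :=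
  ∃ (p : ℕ → ℝ) (ρ1 : ℕ → K →L[ℂ] K) (ρ2 : ℕ → H →L[ℂ] H) (τ : ℕ → W →L[ℂ] W),
    (∀ n, 0 ≤ p n) ∧ Summable p ∧
    (∀ n, IsState (ρ1 n)) ∧ (∀ n, IsState (ρ2 n)) ∧
    (∀ n, IsProductOp ts (ρ1 n) (ρ2 n) (τ n)) ∧
    HasSum (fun n => (p n : ℂ) • τ n) ρ

/-- `σ = (id_K ⊗ Φ)(ρ)`, where `ρ ∈ T(K ⊗ H1)`, `σ ∈ T(K ⊗ H2)`: for a Kraus decomposition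
`Φ = Σ_j A_j (·) A_j*` one has `σ = Σ_j (I ⊗ A_j) ρ (I ⊗ A_j)*`. -/
def IsIdTensorApply (ts : TensorStruct K H1 W) (ts' : TensorStruct K H2 W')
    (Φ : (H1 →L[ℂ] H1) → (H2 →L[ℂ] H2)) (ρ : W →L[ℂ] W) (σ : W' →L[ℂ] W') : Prop :=
  ∃ (ι : Type) (_ : Countable ι) (A : ι → H1 →L[ℂ] H2) (S : H1 →L[ℂ] H1),
    (∀ x, HasSum (fun j => adjoint (A j) (A j x)) (S x)) ∧
    (∀ T, IsTraceClass T → HasSum (fun j => A j ∘L T ∘L adjoint (A j)) (Φ T)) ∧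
    ∃ L : ι → (W →L[ℂ] W'),
      (∀ j x y, L j (ts.t x y) = ts'.t x (A j y)) ∧
      HasSum (fun j => L j ∘L ρ ∘L adjoint (L j)) σ

/-- `Φ` is strongly entanglement breaking: for every separable Hilbert space `K` and every
state `ρ` on `K ⊗ H1`, the state `(id_K ⊗ Φ)(ρ)` is countably decomposable separable. -/
def IsSEB (Φ : (H1 →L[ℂ] H1) → (H2 →L[ℂ] H2)) : Prop :=
  ∀ (K W W' : SepHilbert) (ts : TensorStruct K.carrier H1 W.carrier)
    (ts' : TensorStruct K.carrier H2 W'.carrier)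
    (ρ : W.carrier →L[ℂ] W.carrier) (σ : W'.carrier →L[ℂ] W'.carrier),
    IsState ρ → IsIdTensorApply ts ts' Φ ρ σ → CDSeparable ts' σ

/-! ### Slices of a tensor product -/

namespace TensorStruct

theorem ext_t (ts : TensorStruct K H W) {w w' : W}
    (h : ∀ x y, ⟪ts.t x y, w⟫ = ⟪ts.t x y, w'⟫) : w = w' := by
  have hd : Dense (Submodule.span ℂ {w : W | ∃ x y, w = ts.t x y} : Set W) :=
    Submodule.dense_iff_topologicalClosure_eq_top.mpr ts.dense_t
  refine hd.eq_of_inner_right (𝕜 := ℂ) fun v hv => ?_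
  induction hv using Submodule.span_induction with
  | mem v hv => obtain ⟨x, y, rfl⟩ := hv; exact h x y
  | zero => simp
  | add a b _ _ ha hb => simp only [inner_add_left, ha, hb]
  | smul c a _ ha => simp only [inner_smul_left, ha]

theorem norm_t (ts : TensorStruct K H W) (x : K) (y : H) : ‖ts.t x y‖ = ‖x‖ * ‖y‖ := by
  have h := ts.inner_t x x y y
  simp only [inner_self_eq_norm_sq_to_K] at h
  have h' : ‖ts.t x y‖ ^ 2 = ‖x‖ ^ 2 * ‖y‖ ^ 2 := by exact_mod_cast h
  rw [← mul_pow] at h'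
  exact (pow_left_inj₀ (norm_nonneg _) (by positivity) two_ne_zero).mp h'

/-- The operator `x ⊗ · : H → K ⊗ H`. -/
def left (ts : TensorStruct K H W) (x : K) : H →L[ℂ] W :=
  LinearMap.mkContinuous
    { toFun := ts.t x
      map_add' := fun y y' => ts.ext_t fun a b => by
        simp only [inner_add_right, ts.inner_t, mul_add]
      map_smul' := fun c y => ts.ext_t fun a b => by
        simp only [inner_smul_right, ts.inner_t, RingHom.id_apply]; ring }
    ‖x‖ fun y => (ts.norm_t x y).le

/-- The operator `· ⊗ y : K → K ⊗ H`. -/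
def right (ts : TensorStruct K H W) (y : H) : K →L[ℂ] W :=
  LinearMap.mkContinuous
    { toFun := fun x => ts.t x y
      map_add' := fun x x' => ts.ext_t fun a b => by
        simp only [inner_add_right, ts.inner_t, add_mul]
      map_smul' := fun c x => ts.ext_t fun a b => by
        simp only [inner_smul_right, ts.inner_t, RingHom.id_apply]; ring }
    ‖y‖ fun x => (ts.norm_t x y).le.trans_eq (mul_comm _ _)

theorem left_apply (ts : TensorStruct K H W) (x : K) (y : H) : ts.left x y = ts.t x y := rfl

theorem right_apply (ts : TensorStruct K H W) (x : K) (y : H) : ts.right y x = ts.t x y := rfl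

end TensorStruct

/-! ### Basis independence of the trace -/

theorem sum_norm_inner_mul_le {ι : Type*} (b : HilbertBasis ι ℂ K) (p q : K) (s : Finset ι) :
    ∑ i ∈ s, ‖⟪q, b i⟫ * ⟪b i, p⟫‖ ≤ ‖p‖ * ‖q‖ := by
  calc ∑ i ∈ s, ‖⟪q, b i⟫ * ⟪b i, p⟫‖
      = ∑ i ∈ s, ‖⟪b i, p⟫‖ * ‖⟪b i, q⟫‖ := by
        refine Finset.sum_congr rfl fun i _ => ?_
        rw [norm_mul, mul_comm, norm_inner_symm q]
    _ ≤ √(∑ i ∈ s, ‖⟪b i, p⟫‖ ^ 2) * √(∑ i ∈ s, ‖⟪b i, q⟫‖ ^ 2) :=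
        Real.sum_mul_le_sqrt_mul_sqrt _ _ _
    _ ≤ √(‖p‖ ^ 2) * √(‖q‖ ^ 2) := by
        gcongr <;> exact b.orthonormal.sum_inner_products_le _
    _ = ‖p‖ * ‖q‖ := by simp only [Real.sqrt_sq (norm_nonneg _)]

/-- The trace of `C T D*` for `T = Σ_n |x_n⟩⟨y_n|`, computed in any Hilbert basis, is
`Σ_n ⟪D y_n, C x_n⟫`: the double series converges absolutely, so its sums may be exchanged. -/
theorem eq_tsum_of_hasSum_diag {ι : Type*} (b : HilbertBasis ι ℂ K) (C D : H →L[ℂ] K)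
    {T : H →L[ℂ] H} {x y : ℕ → H} (hs : Summable fun n => ‖x n‖ * ‖y n‖)
    (hT : ∀ v, HasSum (fun n => ⟪y n, v⟫ • x n) (T v)) {s : ℂ}
    (h : HasSum (fun i => ⟪b i, C (T (adjoint D (b i)))⟫) s) :
    s = ∑' n, ⟪D (y n), C (x n)⟫ := by
  have hi : ∀ i, HasSum (fun n => ⟪D (y n), b i⟫ * ⟪b i, C (x n)⟫)
      ⟪b i, C (T (adjoint D (b i)))⟫ := fun i => by
    have := ((hT (adjoint D (b i))).mapL C).mapL (innerSL ℂ (b i))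
    simpa only [map_smul, innerSL_apply_apply, smul_eq_mul, adjoint_inner_right] using this
  have hsum : Summable fun p : ℕ × ι => ⟪D (y p.1), b p.2⟫ * ⟪b p.2, C (x p.1)⟫ := by
    refine Summable.of_norm ?_
    rw [summable_prod_of_nonneg fun _ => norm_nonneg _]
    refine ⟨fun n => ?_, ?_⟩
    · exact summable_of_sum_le (fun _ => norm_nonneg _)
        (sum_norm_inner_mul_le b (C (x n)) (D (y n)))
    · refine Summable.of_nonneg_of_le (fun n => tsum_nonneg fun _ => norm_nonneg _) (fun n => ?_)
        (hs.mul_left (‖C‖ * ‖D‖))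
      calc ∑' i, ‖⟪D (y n), b i⟫ * ⟪b i, C (x n)⟫‖
          ≤ ‖C (x n)‖ * ‖D (y n)‖ := Real.tsum_le_of_sum_le (fun _ => norm_nonneg _)
            (sum_norm_inner_mul_le b (C (x n)) (D (y n)))
        _ ≤ (‖C‖ * ‖x n‖) * (‖D‖ * ‖y n‖) := by
            gcongr <;> exact le_opNorm _ _
        _ = ‖C‖ * ‖D‖ * (‖x n‖ * ‖y n‖) := by ring
  calc s = ∑' i, ∑' n, ⟪D (y n), b i⟫ * ⟪b i, C (x n)⟫ := by
        rw [← h.tsum_eq]; exact tsum_congr fun i => (hi i).tsum_eq.symm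
    _ = ∑' n, ∑' i, ⟪D (y n), b i⟫ * ⟪b i, C (x n)⟫ := Summable.tsum_comm hsum
    _ = ∑' n, ⟪D (y n), C (x n)⟫ := tsum_congr fun n => b.tsum_inner_mul_inner _ _

theorem IsPartialTraceRight.inner_eq {ts : TensorStruct H2 H3 W} {A : H1 →L[ℂ] W}
    {T : H1 →L[ℂ] H1} {P : H2 →L[ℂ] H2} (h : IsPartialTraceRight ts (A ∘L T ∘L adjoint A) P)
    {u v : ℕ → H1} (hs : Summable fun n => ‖u n‖ * ‖v n‖)
    (hT : ∀ w, HasSum (fun n => ⟪v n, w⟫ • u n) (T w)) (x y : H2) :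
    ⟪x, P y⟫ = ∑' n, ⟪adjoint (ts.left y) (A (v n)), adjoint (ts.left x) (A (u n))⟫ := by
  obtain ⟨ι, _, b, hb⟩ := h
  refine eq_tsum_of_hasSum_diag b (adjoint (ts.left x) ∘L A) (adjoint (ts.left y) ∘L A) hs hT ?_
  simpa only [adjoint_comp, adjoint_adjoint, comp_apply, adjoint_inner_right, ts.left_apply]
    using hb x y

theorem IsPartialTraceLeft.inner_eq {ts : TensorStruct H2 H3 W} {A : H1 →L[ℂ] W}
    {T : H1 →L[ℂ] H1} {P : H3 →L[ℂ] H3} (h : IsPartialTraceLeft ts (A ∘L T ∘L adjoint A) P)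
    {u v : ℕ → H1} (hs : Summable fun n => ‖u n‖ * ‖v n‖)
    (hT : ∀ w, HasSum (fun n => ⟪v n, w⟫ • u n) (T w)) (x y : H3) :
    ⟪x, P y⟫ = ∑' n, ⟪adjoint (ts.right y) (A (v n)), adjoint (ts.right x) (A (u n))⟫ := by
  obtain ⟨ι, _, b, hb⟩ := h
  refine eq_tsum_of_hasSum_diag b (adjoint (ts.right x) ∘L A) (adjoint (ts.right y) ∘L A) hs hT ?_
  simpa only [adjoint_comp, adjoint_adjoint, comp_apply, adjoint_inner_right, ts.right_apply]
    using hb x y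

/-- A nuclear decomposition of `|h⟩⟨k|` with a single nonzero term. -/
theorem ketbra_decomp (h k : H) :
    (Summable fun n : ℕ => ‖if n = 0 then h else 0‖ * ‖if n = 0 then k else 0‖) ∧
      ∀ w, HasSum (fun n : ℕ => ⟪if n = 0 then k else 0, w⟫ • (if n = 0 then h else 0))
        (ketbra h k w) := by
  refine ⟨(hasSum_single 0 fun n hn => ?_).summable, fun w => ?_⟩
  · simp [hn]
  · have := hasSum_single (f := fun n : ℕ =>
      ⟪if n = 0 then k else 0, w⟫ • (if n = 0 then h else 0)) 0 fun n hn => by simp [hn]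
    simpa [ketbra] using this

/-- The Gram matrix of the slices `A_x h` is determined by `Φ = tr_{H3}(A · A*)`. -/
theorem gram_eq {Φ : (H1 →L[ℂ] H1) → (H2 →L[ℂ] H2)} {ts : TensorStruct H2 H3 W} {A : H1 →L[ℂ] W}
    (hA : ∀ T, IsTraceClass T → IsPartialTraceRight ts (A ∘L T ∘L adjoint A) (Φ T))
    (x y : H2) (h k : H1) :
    ⟪adjoint (ts.left y) (A k), adjoint (ts.left x) (A h)⟫ = ⟪x, Φ (ketbra h k) y⟫ := by
  obtain ⟨hs, hT⟩ := ketbra_decomp h k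
  rw [(hA _ ⟨_, _, hs, hT⟩).inner_eq hs hT, tsum_eq_single 0 fun n hn => by simp [hn]]
  simp

/-! ### The partial isometry between families with equal Gram matrices -/

theorem exists_partialIsometry_of_gram_eq {ι : Type*} (a : ι → H3) (b : ι → H4)
    (hab : ∀ i j, ⟪a i, a j⟫ = ⟪b i, b j⟫) :
    ∃ V : H3 →L[ℂ] H4, V ∘L adjoint V ∘L V = V ∧
      (∀ i, V (a i) = b i) ∧ ∀ i, adjoint V (b i) = a i := by
  let La := Finsupp.linearCombination ℂ a
  let Lb := Finsupp.linearCombination ℂ b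
  have hinner : ∀ f, ⟪La f, La f⟫ = ⟪Lb f, Lb f⟫ := fun f => by
    simp only [La, Lb, Finsupp.linearCombination_apply, Finsupp.sum, sum_inner, inner_sum,
      inner_smul_left, inner_smul_right, hab]
  have hnorm : ∀ f, ‖Lb f‖ = ‖La f‖ := fun f => by
    rw [@norm_eq_sqrt_re_inner ℂ, @norm_eq_sqrt_re_inner ℂ, hinner]
  let M := (LinearMap.range La).topologicalClosure
  have : CompleteSpace M := (LinearMap.range La).isClosed_topologicalClosure.completeSpace_coe
  let e : (ι →₀ ℂ) →ₗ[ℂ] M :=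
    La.codRestrict M fun f => Submodule.le_topologicalClosure _ ⟨f, rfl⟩
  have he : DenseRange e := by
    intro m
    rw [Topology.IsInducing.subtypeVal.closure_eq_preimage_closure_image, ← Set.range_comp]
    exact m.2
  -- The isometry on the closed span of the vectors `a i` with `a i ↦ b i`.
  let V₀ : M →L[ℂ] H4 := Lb.extendOfNorm e
  have hV₀ : ∀ f, V₀ (e f) = Lb f := fun f =>
    LinearMap.extendOfNorm_eq he ⟨1, fun f => by rw [hnorm, one_mul]; rfl⟩ f
  have hiso : ∀ m, ‖V₀ m‖ = ‖m‖ := fun m => by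
    refine he.induction_on m (isClosed_eq (by fun_prop) (by fun_prop)) fun f => ?_
    rw [hV₀, hnorm]; rfl
  have hadj : adjoint V₀ ∘L V₀ = 1 := V₀.norm_map_iff_adjoint_comp_self.mp hiso
  have hadj' : ∀ m, adjoint V₀ (V₀ m) = m := fun m => by
    simpa using congrArg (fun F : M →L[ℂ] M => F m) hadj
  have hea : ∀ i, (e (Finsupp.single i 1) : H3) = a i := fun i => by simp [e, La]
  have heb : ∀ i, V₀ (e (Finsupp.single i 1)) = b i := fun i => by simp [hV₀, Lb]
  refine ⟨V₀ ∘L M.orthogonalProjectionOnto, ?_, fun i => ?_, fun i => ?_⟩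
  · ext z
    simp only [adjoint_comp, hadj', Submodule.adjoint_orthogonalProjectionOnto, comp_apply,
      Submodule.subtypeL_apply, Submodule.orthogonalProjectionOnto_mem_subspace_eq_self]
  · rw [← hea, ← heb]
    simp
  · rw [← heb, ← hea]
    simp [adjoint_comp, hadj', Submodule.adjoint_orthogonalProjectionOnto]

/-! ### Transport of complements -/

/-- If `V` maps the slices `A_x h` to the slices `B_x h`, then it conjugates `tr_{H2}(A T A*)` to
`tr_{H2}(B T B*)`. -/
theorem compl_eq_conj {ts : TensorStruct H2 H3 W} {ts' : TensorStruct H2 H4 W'}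
    {A : H1 →L[ℂ] W} {B : H1 →L[ℂ] W'} {T : H1 →L[ℂ] H1} (hT : IsTraceClass T)
    {P : H3 →L[ℂ] H3} {Q : H4 →L[ℂ] H4}
    (hP : IsPartialTraceLeft ts (A ∘L T ∘L adjoint A) P)
    (hQ : IsPartialTraceLeft ts' (B ∘L T ∘L adjoint B) Q) (V : H3 →L[ℂ] H4)
    (hV : ∀ x h, V (adjoint (ts.left x) (A h)) = adjoint (ts'.left x) (B h)) :
    Q = V ∘L P ∘L adjoint V := by
  obtain ⟨u, v, hs, hT⟩ := hT
  have key : ∀ z h, adjoint (ts.right (adjoint V z)) (A h) = adjoint (ts'.right z) (B h) := by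
    intro z h
    refine ext_inner_left ℂ fun x => ?_
    rw [adjoint_inner_right, adjoint_inner_right, ts.right_apply, ts'.right_apply,
      ← ts.left_apply, ← ts'.left_apply, ← adjoint_inner_right, adjoint_inner_left, hV,
      adjoint_inner_right]
  ext z'
  refine ext_inner_left ℂ fun z => ?_
  rw [comp_apply, comp_apply, ← adjoint_inner_left V, hP.inner_eq hs hT, hQ.inner_eq hs hT]
  simp only [key]

/-- If `Ψ1 : T(H1) → T(H3)` and `Ψ2 : T(H1) → T(H4)` are both quantum
operations complementary to a quantum operation `Φ : T(H1) → T(H2)`, then there is a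
partial isometry `W ∈ B(H3,H4)` with `Ψ2(T) = W Ψ1(T) W*` and `Ψ1(T) = W* Ψ2(T) W`
for all trace-class `T`. -/
theorem complementary_unique_upto_partialIsometry
    {H1 H2 H3 H4 : Type*}
    [NormedAddCommGroup H1] [InnerProductSpace ℂ H1] [CompleteSpace H1] [SeparableSpace H1]
    [NormedAddCommGroup H2] [InnerProductSpace ℂ H2] [CompleteSpace H2] [SeparableSpace H2]
    [NormedAddCommGroup H3] [InnerProductSpace ℂ H3] [CompleteSpace H3] [SeparableSpace H3]
    [NormedAddCommGroup H4] [InnerProductSpace ℂ H4] [CompleteSpace H4] [SeparableSpace H4]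
    (Φ : (H1 →L[ℂ] H1) → (H2 →L[ℂ] H2))
    (Ψ1 : (H1 →L[ℂ] H1) → (H3 →L[ℂ] H3))
    (Ψ2 : (H1 →L[ℂ] H1) → (H4 →L[ℂ] H4))
    (hΦ : IsQuantumOperation Φ)
    (hΨ1 : IsQuantumOperation Ψ1) (hΨ2 : IsQuantumOperation Ψ2)
    (hc1 : IsComplementary Ψ1 Φ) (hc2 : IsComplementary Ψ2 Φ) :
    ∃ W : H3 →L[ℂ] H4,
      W ∘L adjoint W ∘L W = W ∧
      ∀ T, IsTraceClass T →
        Ψ2 T = W ∘L Ψ1 T ∘L adjoint W ∧ Ψ1 T = adjoint W ∘L Ψ2 T ∘L W := by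
  obtain ⟨K3, ts, A, hA⟩ := hc1
  obtain ⟨K4, ts', B, hB⟩ := hc2
  obtain ⟨V, hV, hab, hba⟩ := exists_partialIsometry_of_gram_eq
    (fun p : H2 × H1 => adjoint (ts.left p.1) (A p.2))
    (fun p : H2 × H1 => adjoint (ts'.left p.1) (B p.2)) fun i j => by
      rw [gram_eq fun T hT => (hA T hT).1, gram_eq fun T hT => (hB T hT).1]
  refine ⟨V, hV, fun T hT => ⟨?_, ?_⟩⟩
  · exact compl_eq_conj hT (hA T hT).2 (hB T hT).2 V fun x h => hab (x, h)
  · simpa only [adjoint_adjoint] using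
      compl_eq_conj hT (hB T hT).2 (hA T hT).2 (adjoint V) fun x h => hba (x, h)

end PaperInf
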